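/- Let b : ℝ → ℝ be a continuous 2π-periodic function with ∫₀^{2π} b(s) ds = 0, and let B : 𝕋 → ℝ be the continuous function on the circle 𝕋 = ℝ/2πℤ induced by the 2π-periodic function t ↦ −∫₀ᵗ b(s) ds. For r ∈ ℝ set Ω̃_r = {t ∈ 𝕋 : B(t) < r}. Suppose Ω̃_r is not connected for some r ∈ ℝ. Then there exists r₀ < r such that Ω̃_{r₀} has two distinct connected components with disjoint closures; moreover, for every σ > 1 there exist smooth 2π-periodic functions f₀, v₀ : ℝ → ℝ satisfying Gevrey-σ estimates (i.e., there exist C, h > 0 with sup_t |f₀^{(k)}(t)| ≤ C h^k (k!)^σ and sup_t |v₀^{(k)}(t)| ≤ C h^k (k!)^σ for all k ∈ ℕ) such that ∫₀^{2π} f₀(s) ds = 0, the support of f₀ (viewed as a subset of 𝕋, i.e., the closure of {t ∈ 𝕋 : f₀(t) ≠ 0}) is disjoint from Ω̃_{r₀}, the support of v₀′ (viewed as a subset of 𝕋) is contained in Ω̃_{r₀}, and ∫₀^{2π} f₀(s) v₀(s) ds > 0. -/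

import Mathlib

open Real

/-- Uniform Gevrey estimates of order `σ` on the whole real line. -/
def HasGevreyBounds (σ : ℝ) (f : ℝ → ℝ) : Prop :=
  ∃ C > (0 : ℝ), ∃ h > (0 : ℝ), ∀ k : ℕ, ∀ t : ℝ,
    |iteratedDeriv k f t| ≤ C * h ^ k * ((Nat.factorial k : ℝ)) ^ σ

/-- The `2π`-periodic bump `exp (-(cos t - cos δ)⁻ⁿ)` (for odd `n`), extended by zero to the set
where `cos t ≤ cos δ`. -/
noncomputable def cosBump (n : ℕ) (δ t : ℝ) : ℝ :=
  expNegInvGlue ((Real.cos t - Real.cos δ) ^ n)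

/-- If `f` is the restriction of a holomorphic function near an open subset of the real line, then
so are its iterated derivatives. -/
lemma iteratedDeriv_eq_ofReal_iteratedDeriv {f : ℝ → ℝ} {F : ℂ → ℂ} {U : Set ℝ} (hU : IsOpen U)
    (hf : ContDiff ℝ (⊤ : ℕ∞) f) (hF : ∀ t ∈ U, AnalyticAt ℂ F (t : ℂ))
    (h : ∀ t ∈ U, F t = f t) (k : ℕ) :
    ∀ t ∈ U, iteratedDeriv k F (t : ℂ) = ((iteratedDeriv k f t : ℝ) : ℂ) := by
  induction k with
  | zero => simpa using h
  | succ k ih =>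
    intro t ht
    have hFd : HasDerivAt (iteratedDeriv k F) (iteratedDeriv (k + 1) F t) t := by
      rw [iteratedDeriv_succ]
      have := (hF t ht).iterated_deriv k
      rw [← iteratedDeriv_eq_iterate] at this
      exact this.differentiableAt.hasDerivAt
    have hfd : HasDerivAt (iteratedDeriv k f) (iteratedDeriv (k + 1) f t) t := by
      rw [iteratedDeriv_succ]
      exact ((hf.differentiable_iteratedDeriv k
        (by exact_mod_cast ENat.natCast_lt_top k)) t).hasDerivAt
    refine hFd.comp_ofReal.unique (hfd.ofReal_comp.congr_of_eventuallyEq ?_)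
    filter_upwards [hU.mem_nhds ht] with s hs using ih s hs

lemma norm_cos_sub_cos_ofReal_le {z : ℂ} {t : ℝ} (h : ‖z - t‖ ≤ 1) :
    ‖Complex.cos z - Complex.cos t‖ ≤ 2 * ‖z - t‖ := by
  have e : Complex.cos z - Complex.cos t =
      (Complex.exp (t * Complex.I) * (Complex.exp ((z - t) * Complex.I) - 1) +
        Complex.exp (-t * Complex.I) * (Complex.exp (-(z - t) * Complex.I) - 1)) / 2 := by
    simp only [Complex.cos, mul_sub, ← Complex.exp_add, mul_one]
    ring_nf
  have h1 := Complex.norm_exp_sub_one_le (x := (z - t) * Complex.I) (by simpa using h)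
  have h2 := Complex.norm_exp_sub_one_le (x := -(z - t) * Complex.I)
    (by rw [norm_mul, norm_neg]; simpa using h)
  have h3 : ‖Complex.exp (t * Complex.I)‖ = 1 := Complex.norm_exp_ofReal_mul_I t
  have h4 : ‖Complex.exp (-t * Complex.I)‖ = 1 := by
    simpa using Complex.norm_exp_ofReal_mul_I (-t)
  simp only [norm_mul, norm_neg, Complex.norm_I, mul_one] at h1 h2
  rw [e, norm_div, Complex.norm_ofNat, div_le_iff₀ two_pos]
  refine (norm_add_le _ _).trans ?_
  rw [norm_mul, norm_mul, h3, h4]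
  linarith

/-- On a small relative disc around `1`, the real part of `w⁻ⁿ` stays above `1 / 2`. -/
lemma exists_half_le_re_inv_pow (n : ℕ) :
    ∃ ε > (0 : ℝ), ε ≤ 1 ∧ ∀ u : ℂ, ‖u‖ ≤ ε → 1 + u ≠ 0 ∧ 1 / 2 ≤ (((1 + u) ^ n)⁻¹).re := by
  have hc : ContinuousAt (fun u : ℂ => (((1 + u) ^ n)⁻¹).re) 0 := by
    refine Complex.continuous_re.continuousAt.comp (ContinuousAt.inv₀ (by fun_prop) (by simp))
  have h1 : ∀ᶠ u : ℂ in nhds 0, 1 / 2 < (((1 + u) ^ n)⁻¹).re :=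
    hc.eventually_const_lt (by norm_num)
  have h2 : ∀ᶠ u : ℂ in nhds 0, 1 + u ≠ 0 :=
    ContinuousAt.eventually_ne (by fun_prop) (by simp)
  obtain ⟨ε, hε, H⟩ := Metric.nhds_basis_closedBall.eventually_iff.1 (h1.and h2)
  refine ⟨min ε 1, by positivity, min_le_right _ _, fun u hu => ?_⟩
  have := H (x := u) (by simpa using hu.trans (min_le_left _ _))
  exact ⟨this.2, this.1.le⟩

/-- The elementary inequality `x⁻ᵏ exp (-x⁻ⁿ / 2) ≤ 2ᵏ (k!) ^ (1 / n)`. -/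
lemma inv_pow_mul_exp_le {n : ℕ} (hn : n ≠ 0) (k : ℕ) {x : ℝ} (hx : 0 < x) :
    (x ^ k)⁻¹ * Real.exp (-((x ^ n)⁻¹ / 2)) ≤ 2 ^ k * (k.factorial : ℝ) ^ (1 / (n : ℝ)) := by
  have hf : (1 : ℝ) ≤ k.factorial := by exact_mod_cast k.factorial_pos
  refine le_of_pow_le_pow_left₀ hn (by positivity) ?_
  set y := (x ^ n)⁻¹ / 2 with hy
  have hy0 : 0 < y := by positivity
  have e1 : ((k.factorial : ℝ) ^ (1 / (n : ℝ))) ^ n = k.factorial := by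
    rw [one_div, Real.rpow_inv_natCast_pow (by positivity) hn]
  have e2 : ((x ^ k)⁻¹) ^ n = (2 * y) ^ k := by
    rw [hy, mul_div_cancel₀ _ two_ne_zero, inv_pow, inv_pow, ← pow_mul, ← pow_mul, mul_comm]
  rw [mul_pow, mul_pow, e1, e2, mul_pow, ← Real.exp_nat_mul]
  have h1 := Real.pow_div_factorial_le_exp y hy0.le k
  rw [div_le_iff₀ (by positivity)] at h1
  have h2 : Real.exp (n * -y) ≤ Real.exp (-y) := by
    have : (1 : ℝ) ≤ n := by exact_mod_cast Nat.one_le_iff_ne_zero.2 hn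
    gcongr
    nlinarith
  have h3 : y ^ k * Real.exp (n * -y) ≤ k.factorial := by
    calc y ^ k * Real.exp (n * -y) ≤ (Real.exp y * k.factorial) * Real.exp (-y) := by gcongr
      _ = k.factorial := by rw [mul_right_comm, ← Real.exp_add]; simp
  have h4 : (2 : ℝ) ^ k ≤ (2 ^ k) ^ n := le_self_pow₀ (one_le_pow₀ one_le_two) hn
  calc 2 ^ k * y ^ k * Real.exp (n * -y) = 2 ^ k * (y ^ k * Real.exp (n * -y)) := by ring
    _ ≤ (2 ^ k) ^ n * k.factorial := by gcongr

section cosBump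

variable {n : ℕ} {δ : ℝ}

lemma contDiff_cosBump : ContDiff ℝ (⊤ : ℕ∞) (cosBump n δ) :=
  expNegInvGlue.contDiff.comp ((Real.contDiff_cos.sub contDiff_const).pow n)

lemma periodic_cosBump : Function.Periodic (cosBump n δ) (2 * Real.pi) := fun t => by
  simp [cosBump]

lemma cosBump_nonneg (t : ℝ) : 0 ≤ cosBump n δ t := expNegInvGlue.nonneg _

lemma cosBump_zero_pos (h0 : 0 < δ) (hpi : δ ≤ Real.pi) : 0 < cosBump n δ 0 := by
  refine expNegInvGlue.pos_of_pos (pow_pos (sub_pos.2 ?_) n)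
  exact Real.cos_lt_cos_of_nonneg_of_le_pi le_rfl hpi h0

lemma cosBump_eq_zero_of_cos_le (hn : Odd n) {t : ℝ} (h : Real.cos t ≤ Real.cos δ) :
    cosBump n δ t = 0 :=
  expNegInvGlue.zero_of_nonpos (hn.pow_nonpos (sub_nonpos.2 h))

lemma cosBump_eq_zero (hn : Odd n) (h0 : 0 < δ) {t : ℝ} (h1 : δ ≤ |t|)
    (h2 : |t| ≤ 2 * Real.pi - δ) : cosBump n δ t = 0 := by
  refine cosBump_eq_zero_of_cos_le hn ?_
  rw [← Real.cos_abs t]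
  rcases le_total |t| Real.pi with h | h
  · exact Real.cos_le_cos_of_nonneg_of_le_pi h0.le h h1
  · rw [← Real.cos_two_pi_sub |t|]
    exact Real.cos_le_cos_of_nonneg_of_le_pi h0.le (by linarith) (by linarith)

lemma exists_abs_add_zsmul_le_of_cosBump_ne_zero (hn : Odd n) (h0 : 0 < δ)
    {t : ℝ} (h : cosBump n δ t ≠ 0) : ∃ m : ℤ, |t + m • (2 * Real.pi)| ≤ δ := by
  obtain ⟨m, hm, -⟩ := existsUnique_add_zsmul_mem_Ico Real.two_pi_pos t (-Real.pi)
  refine ⟨m, ?_⟩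
  by_contra! hlt
  have habs : |t + m • (2 * Real.pi)| ≤ Real.pi := abs_le.2 ⟨hm.1, by linarith [hm.2]⟩
  refine h ?_
  rw [← (periodic_cosBump (n := n) (δ := δ)).zsmul m t]
  exact cosBump_eq_zero hn h0 hlt.le (by linarith)

/-- Cauchy estimates for `cosBump` on the set where it does not vanish. -/
lemma exists_abs_iteratedDeriv_cosBump_le :
    ∃ c > (0 : ℝ), ∀ k : ℕ, ∀ t : ℝ, 0 < Real.cos t - Real.cos δ →
      |iteratedDeriv k (cosBump n δ) t| ≤ k.factorial *
        Real.exp (-(((Real.cos t - Real.cos δ) ^ n)⁻¹ / 2)) /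
          (c * (Real.cos t - Real.cos δ)) ^ k := by
  obtain ⟨ε, hε, hε1, H⟩ := exists_half_le_re_inv_pow n
  refine ⟨ε / 2, by positivity, fun k t ht => ?_⟩
  set x := Real.cos t - Real.cos δ with hx
  let F : ℂ → ℂ := fun z => Complex.exp (-((Complex.cos z - Real.cos δ) ^ n)⁻¹)
  have hFdiff : ∀ z : ℂ, Complex.cos z - Real.cos δ ≠ 0 → DifferentiableAt ℂ F z := by
    intro z hz
    have h1 : DifferentiableAt ℂ (fun z => (Complex.cos z - Real.cos δ) ^ n) z := by fun_prop
    exact (h1.inv (pow_ne_zero n hz)).neg.cexp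
  have hFan : ∀ s ∈ {s : ℝ | Real.cos δ < Real.cos s}, AnalyticAt ℂ F (s : ℂ) := by
    intro s hs
    have ho : IsOpen {z : ℂ | Complex.cos z - Real.cos δ ≠ 0} :=
      isOpen_ne_fun (by fun_prop) (by fun_prop)
    refine DifferentiableOn.analyticAt (fun z hz => (hFdiff z hz).differentiableWithinAt)
      (ho.mem_nhds ?_)
    simp only [Set.mem_ofPred_eq] at hs ⊢
    exact_mod_cast (sub_pos.2 hs).ne'
  have hFeq : ∀ s ∈ {s : ℝ | Real.cos δ < Real.cos s}, F s = cosBump n δ s := by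
    intro s hs
    have : 0 < (Real.cos s - Real.cos δ) ^ n := pow_pos (sub_pos.2 hs) n
    simp [F, cosBump, expNegInvGlue, not_le.2 this]
  have hder := iteratedDeriv_eq_ofReal_iteratedDeriv
    (isOpen_lt continuous_const Real.continuous_cos) contDiff_cosBump hFan hFeq k t (sub_pos.1 ht)
  have hx2 : x ≤ 2 := by linarith [Real.cos_le_one t, Real.neg_one_le_cos δ]
  have key : ∀ z ∈ Metric.closedBall (t : ℂ) (ε / 2 * x),
      Complex.cos z - Real.cos δ ≠ 0 ∧ ‖F z‖ ≤ Real.exp (-((x ^ n)⁻¹ / 2)) := by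
    intro z hz
    rw [mem_closedBall_iff_norm] at hz
    have h1 := norm_cos_sub_cos_ofReal_le (z := z) (t := t) (by nlinarith)
    set u : ℂ := (Complex.cos z - Complex.cos t) / x with hu
    have hx0 : (x : ℂ) ≠ 0 := by exact_mod_cast ht.ne'
    have hun : ‖u‖ ≤ ε := by
      rw [hu, norm_div, Complex.norm_real, Real.norm_of_nonneg ht.le, div_le_iff₀ ht]
      linarith
    have hw : Complex.cos z - Real.cos δ = x * (1 + u) := by
      rw [hu, mul_add, mul_div_cancel₀ _ hx0, hx]
      push_cast
      ring
    obtain ⟨hne, hre⟩ := H u hun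
    refine ⟨hw ▸ mul_ne_zero hx0 hne, ?_⟩
    simp only [F]
    rw [Complex.norm_exp, hw, mul_pow, mul_inv, Complex.neg_re, ← Complex.ofReal_pow,
      ← Complex.ofReal_inv, Complex.re_ofReal_mul, Real.exp_le_exp, neg_le_neg_iff, div_eq_mul_inv]
    have : 0 < (x ^ n)⁻¹ := by positivity
    nlinarith
  have hR : 0 < ε / 2 * x := by positivity
  have := Complex.norm_iteratedDeriv_le_of_forall_mem_sphere_norm_le (f := F) (c := (t : ℂ)) k hR
    (DifferentiableOn.diffContOnCl (by
      rw [closure_ball _ hR.ne']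
      exact fun z hz => (hFdiff z (key z hz).1).differentiableWithinAt))
    (fun z hz => (key z (Metric.sphere_subset_closedBall hz)).2)
  rwa [hder, Complex.norm_real, Real.norm_eq_abs] at this

lemma hasGevreyBounds_cosBump (hn : Odd n) {σ : ℝ} (hσ : 1 + 1 / (n : ℝ) ≤ σ) :
    HasGevreyBounds σ (cosBump n δ) := by
  obtain ⟨c, hc, H⟩ := exists_abs_iteratedDeriv_cosBump_le (n := n) (δ := δ)
  refine ⟨1, one_pos, 2 / c, by positivity, fun k t => ?_⟩
  have hf : (1 : ℝ) ≤ k.factorial := by exact_mod_cast k.factorial_pos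
  have hpos : ∀ s : ℝ, Real.cos δ < Real.cos s →
      |iteratedDeriv k (cosBump n δ) s| ≤ 1 * (2 / c) ^ k * (k.factorial : ℝ) ^ σ := by
    intro s hs
    have hs' := sub_pos.2 hs
    refine (H k s hs').trans ?_
    have h1 := inv_pow_mul_exp_le hn.pos.ne' k hs'
    set x := Real.cos s - Real.cos δ
    calc k.factorial * Real.exp (-((x ^ n)⁻¹ / 2)) / (c * x) ^ k
        = k.factorial / c ^ k * ((x ^ k)⁻¹ * Real.exp (-((x ^ n)⁻¹ / 2))) := by
          rw [mul_pow]; field_simp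
      _ ≤ k.factorial / c ^ k * (2 ^ k * (k.factorial : ℝ) ^ (1 / (n : ℝ))) := by gcongr
      _ = 1 * (2 / c) ^ k * (k.factorial : ℝ) ^ (1 + 1 / (n : ℝ)) := by
          rw [Real.rpow_add (by positivity), Real.rpow_one, div_pow]; ring
      _ ≤ _ := by gcongr
  by_cases ht : t ∈ closure {s : ℝ | Real.cos δ < Real.cos s}
  · have hcl : IsClosed {s : ℝ | |iteratedDeriv k (cosBump n δ) s| ≤
        1 * (2 / c) ^ k * (k.factorial : ℝ) ^ σ} :=
      isClosed_le (contDiff_cosBump.continuous_iteratedDeriv k (by exact_mod_cast le_top)).abs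
        continuous_const
    exact closure_minimal hpos hcl ht
  · have hev : cosBump n δ =ᶠ[nhds t] fun _ => 0 := by
      filter_upwards [isClosed_closure.isOpen_compl.mem_nhds ht] with s hs
      exact cosBump_eq_zero_of_cos_le hn (not_lt.1 fun h => hs (subset_closure h))
    rw [hev.iteratedDeriv_eq k, iteratedDeriv_fun_const_zero, abs_zero]
    positivity

end cosBump

lemma HasGevreyBounds.comp_sub_const {σ : ℝ} {f : ℝ → ℝ} (hf : HasGevreyBounds σ f) (a : ℝ) :
    HasGevreyBounds σ fun t => f (t - a) := by
  obtain ⟨C, hC, h, hh, H⟩ := hf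
  refine ⟨C, hC, h, hh, fun k t => ?_⟩
  rw [iteratedDeriv_comp_sub_const]
  exact H k (t - a)

lemma HasGevreyBounds.sub {σ : ℝ} {f g : ℝ → ℝ} (hf : HasGevreyBounds σ f)
    (hg : HasGevreyBounds σ g) (hfs : ContDiff ℝ (⊤ : ℕ∞) f) (hgs : ContDiff ℝ (⊤ : ℕ∞) g) :
    HasGevreyBounds σ fun t => f t - g t := by
  obtain ⟨C, hC, h, hh, H⟩ := hf
  obtain ⟨C', hC', h', hh', H'⟩ := hg
  refine ⟨C + C', by positivity, max h h', by positivity, fun k t => ?_⟩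
  rw [iteratedDeriv_fun_sub (hfs.of_le (by exact_mod_cast le_top)).contDiffAt
    (hgs.of_le (by exact_mod_cast le_top)).contDiffAt]
  calc |iteratedDeriv k f t - iteratedDeriv k g t|
      ≤ |iteratedDeriv k f t| + |iteratedDeriv k g t| := abs_sub _ _
    _ ≤ C * h ^ k * (k.factorial : ℝ) ^ σ + C' * h' ^ k * (k.factorial : ℝ) ^ σ :=
        add_le_add (H k t) (H' k t)
    _ ≤ C * max h h' ^ k * (k.factorial : ℝ) ^ σ +
          C' * max h h' ^ k * (k.factorial : ℝ) ^ σ := by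
        gcongr
        · exact le_max_left _ _
        · exact le_max_right _ _
    _ = _ := by ring

/-- A bounded primitive of a function with Gevrey bounds has Gevrey bounds. -/
lemma HasGevreyBounds.of_deriv {σ : ℝ} (hσ : 0 ≤ σ) {v : ℝ → ℝ} (hv : HasGevreyBounds σ (deriv v))
    {A : ℝ} (hA : ∀ t, |v t| ≤ A) : HasGevreyBounds σ v := by
  obtain ⟨C, hC, h, hh, H⟩ := hv
  have hA0 : 0 ≤ A := (abs_nonneg _).trans (hA 0)
  refine ⟨C + A, by positivity, max h 1, by positivity, fun k t => ?_⟩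
  rcases k with _ | k
  · simpa using (hA t).trans (by linarith)
  · rw [iteratedDeriv_succ']
    refine (H k t).trans ?_
    have h1 : h ^ k ≤ max h 1 ^ (k + 1) :=
      (pow_le_pow_left₀ hh.le (le_max_left _ _) k).trans
        (pow_le_pow_right₀ (le_max_right _ _) k.le_succ)
    have h2 : (k.factorial : ℝ) ≤ (k + 1).factorial := by
      exact_mod_cast Nat.factorial_le k.le_succ
    gcongr
    linarith

/-- A continuous function on the circle with a disconnected strict sublevel set oscillates: its
lift is `≥ r`, `< r`, `≥ r`, `< r` at four successive points, and the two points of the sublevel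
set lie in no common connected part of it. -/
lemma exists_alternating_of_not_isPreconnected {T : ℝ} [hT : Fact (0 < T)] {B : AddCircle T → ℝ}
    {r : ℝ} (hdisc : ¬ IsPreconnected {t : AddCircle T | B t < r}) :
    ∃ q x p y : ℝ, q < x ∧ x < p ∧ p < y ∧ y < q + T ∧ r ≤ B q ∧ B x < r ∧ r ≤ B p ∧ B y < r ∧
      ∀ S ⊆ {t : AddCircle T | B t < r}, IsPreconnected S →
        (x : AddCircle T) ∈ S → (y : AddCircle T) ∉ S := by
  have hex : ∃ a ∈ {t : AddCircle T | B t < r}, ∃ a' ∈ {t : AddCircle T | B t < r},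
      ∀ S ⊆ {t : AddCircle T | B t < r}, IsPreconnected S → a ∈ S → a' ∉ S := by
    by_contra! hcon
    refine hdisc (isPreconnected_of_forall_pair fun a ha a' ha' => ?_)
    obtain ⟨S, hS, hpre, h, h'⟩ := hcon a ha a' ha'
    exact ⟨S, hS, h, h', hpre⟩
  obtain ⟨a, ha, a', ha', H⟩ := hex
  obtain ⟨x, rfl⟩ := QuotientAddGroup.mk_surjective a
  obtain ⟨y, hy, rfl⟩ : a' ∈ ((↑) : ℝ → AddCircle T) '' Set.Ico x (x + T) := by
    rw [AddCircle.coe_image_Ico_eq]; trivial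
  have harc : ∀ u v : ℝ, u ≤ v → ((u : AddCircle T) = x ∧ (v : AddCircle T) = y ∨
      (u : AddCircle T) = y ∧ (v : AddCircle T) = x) → ∃ p, u < p ∧ p < v ∧ r ≤ B p := by
    intro u v huv h
    have hu : B u < r := by rcases h with h | h <;> rw [h.1] <;> assumption
    have hv : B v < r := by rcases h with h | h <;> rw [h.2] <;> assumption
    by_contra! hcon
    have hsub : ((↑) : ℝ → AddCircle T) '' Set.Icc u v ⊆ {t : AddCircle T | B t < r} := by
      rintro _ ⟨s, hs, rfl⟩
      rcases hs.1.eq_or_lt with rfl | h1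
      · exact hu
      rcases hs.2.eq_or_lt with rfl | h2
      · exact hv
      exact hcon s h1 h2
    have hpre : IsPreconnected (((↑) : ℝ → AddCircle T) '' Set.Icc u v) :=
      isPreconnected_Icc.image _ (AddCircle.continuous_mk' T).continuousOn
    have hmu := Set.mem_image_of_mem ((↑) : ℝ → AddCircle T) (Set.left_mem_Icc.2 huv)
    have hmv := Set.mem_image_of_mem ((↑) : ℝ → AddCircle T) (Set.right_mem_Icc.2 huv)
    rcases h with ⟨h1, h2⟩ | ⟨h1, h2⟩
    · exact H _ hsub hpre (h1 ▸ hmu) (h2 ▸ hmv)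
    · exact H _ hsub hpre (h2 ▸ hmv) (h1 ▸ hmu)
  have hxT : ((x + T : ℝ) : AddCircle T) = x := AddCircle.coe_add_period T x
  obtain ⟨p, hxp, hpy, hp⟩ := harc x y hy.1 (Or.inl ⟨rfl, rfl⟩)
  obtain ⟨q, hyq, hqx, hq⟩ := harc y (x + T) hy.2.le (Or.inr ⟨rfl, hxT⟩)
  refine ⟨q - T, x, p, y, by linarith, hxp, hpy, by linarith, ?_, ha, hp, ha', H⟩
  rwa [← AddCircle.coe_add_period T (q - T), sub_add_cancel]

/-- Points separated in `{B < r}` have components of `{B < r₀}`, `r₀ < r`, with disjoint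
closures. -/
lemma disjoint_closure_connectedComponentIn {X : Type*} [TopologicalSpace X] {B : X → ℝ}
    (hB : Continuous B) {r r₀ : ℝ} (hr : r₀ < r) {a c : X} (ha : B a < r₀) (hc : B c < r₀)
    (H : ∀ S ⊆ {t | B t < r}, IsPreconnected S → a ∈ S → c ∉ S) :
    Disjoint (closure (connectedComponentIn {t | B t < r₀} a))
      (closure (connectedComponentIn {t | B t < r₀} c)) := by
  have hsub : ∀ u, closure (connectedComponentIn {t | B t < r₀} u) ⊆ {t | B t < r} := fun u =>
    (closure_minimal ((connectedComponentIn_subset _ _).trans fun t ht => le_of_lt ht)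
      (isClosed_le hB continuous_const)).trans fun t (ht : B t ≤ r₀) => ht.trans_lt hr
  rw [Set.disjoint_iff_forall_ne]
  rintro z hz _ hz' rfl
  refine H _ (Set.union_subset (hsub a) (hsub c))
    (IsPreconnected.union z hz hz' isPreconnected_connectedComponentIn.closure
      isPreconnected_connectedComponentIn.closure)
    (Or.inl (subset_closure (mem_connectedComponentIn ha)))
    (Or.inr (subset_closure (mem_connectedComponentIn hc)))

/-- The difference of two translates of `cosBump`. -/
noncomputable def bumpDiff (n : ℕ) (δ a c t : ℝ) : ℝ := cosBump n δ (t - a) - cosBump n δ (t - c)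

section bumpDiff

variable {n : ℕ} {δ : ℝ}

lemma contDiff_bumpDiff (a c : ℝ) : ContDiff ℝ (⊤ : ℕ∞) (bumpDiff n δ a c) :=
  (contDiff_cosBump.comp (contDiff_id.sub contDiff_const)).sub
    (contDiff_cosBump.comp (contDiff_id.sub contDiff_const))

lemma periodic_bumpDiff (a c : ℝ) : Function.Periodic (bumpDiff n δ a c) (2 * Real.pi) :=
  (periodic_cosBump.sub_const a).sub (periodic_cosBump.sub_const c)

lemma hasGevreyBounds_bumpDiff (hn : Odd n) {σ : ℝ} (hσ : 1 + 1 / (n : ℝ) ≤ σ) (a c : ℝ) :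
    HasGevreyBounds σ (bumpDiff n δ a c) :=
  ((hasGevreyBounds_cosBump hn hσ).comp_sub_const a).sub
    ((hasGevreyBounds_cosBump hn hσ).comp_sub_const c)
    (contDiff_cosBump.comp (contDiff_id.sub contDiff_const))
    (contDiff_cosBump.comp (contDiff_id.sub contDiff_const))

lemma integral_bumpDiff (a c u : ℝ) :
    ∫ s in u..(u + 2 * Real.pi), bumpDiff n δ a c s = 0 := by
  have hshift : ∀ d : ℝ, ∫ s in u..(u + 2 * Real.pi), cosBump n δ (s - d) =
      ∫ s in (0 : ℝ)..(0 + 2 * Real.pi), cosBump n δ s := fun d => by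
    rw [intervalIntegral.integral_comp_sub_right, add_sub_right_comm]
    exact periodic_cosBump.intervalIntegral_add_eq _ _
  have hint : ∀ d : ℝ, IntervalIntegrable (fun s => cosBump n δ (s - d)) MeasureTheory.volume u
      (u + 2 * Real.pi) := fun d =>
    (contDiff_cosBump.continuous.comp (continuous_sub_right d)).intervalIntegrable _ _
  simp only [bumpDiff]
  rw [intervalIntegral.integral_sub (hint a) (hint c), hshift, hshift, sub_self]

/-- On the circle, the closed support of `bumpDiff` lies in any set containing the two closed arcs
of radius `δ`. -/
lemma closure_coe_image_support_bumpDiff_subset (hn : Odd n) (h0 : 0 < δ) {a c : ℝ}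
    {V : Set (AddCircle (2 * Real.pi))}
    (ha : Metric.closedBall a δ ⊆ (↑) ⁻¹' V) (hc : Metric.closedBall c δ ⊆ (↑) ⁻¹' V) :
    closure ((fun t : ℝ => (t : AddCircle (2 * Real.pi))) '' Function.support (bumpDiff n δ a c))
      ⊆ V := by
  have hcl : IsClosed ((fun t : ℝ => (t : AddCircle (2 * Real.pi))) ''
      (Metric.closedBall a δ ∪ Metric.closedBall c δ)) :=
    haveI : Fact (0 < 2 * Real.pi) := ⟨Real.two_pi_pos⟩
    (((isCompact_closedBall a δ).union (isCompact_closedBall c δ)).image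
      (AddCircle.continuous_mk' _)).isClosed
  have hmem : ∀ t d : ℝ, cosBump n δ (t - d) ≠ 0 →
      (t : AddCircle (2 * Real.pi)) ∈ (fun t : ℝ => (t : AddCircle (2 * Real.pi))) ''
        Metric.closedBall d δ := by
    intro t d h
    obtain ⟨m, hm⟩ := exists_abs_add_zsmul_le_of_cosBump_ne_zero hn h0 h
    refine ⟨t + m • (2 * Real.pi), ?_, ?_⟩
    · rwa [mem_closedBall_iff_norm, Real.norm_eq_abs, add_sub_right_comm]
    · simp only [AddCircle.coe_add, AddCircle.coe_zsmul, AddCircle.coe_period, smul_zero, add_zero]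
  refine (closure_minimal ?_ hcl).trans (Set.image_subset_iff.2 (Set.union_subset ha hc))
  rintro _ ⟨t, ht, rfl⟩
  rw [Set.image_union]
  by_cases h : cosBump n δ (t - a) = 0
  · refine Or.inr (hmem t c fun h' => ht ?_)
    simp only [bumpDiff, h, h', sub_self]
  · exact Or.inl (hmem t a h)

/-- The primitive of `bumpDiff` vanishing at `q`. -/
noncomputable def bumpPrimitive (n : ℕ) (δ q x y t : ℝ) : ℝ := ∫ s in q..t, bumpDiff n δ x y s

lemma hasDerivAt_bumpPrimitive (q x y t : ℝ) :
    HasDerivAt (bumpPrimitive n δ q x y) (bumpDiff n δ x y t) t :=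
  (contDiff_bumpDiff x y).continuous.integral_hasStrictDerivAt q t |>.hasDerivAt

lemma deriv_bumpPrimitive (q x y : ℝ) :
    deriv (bumpPrimitive n δ q x y) = bumpDiff n δ x y :=
  funext fun t => (hasDerivAt_bumpPrimitive q x y t).deriv

lemma contDiff_bumpPrimitive (q x y : ℝ) : ContDiff ℝ (⊤ : ℕ∞) (bumpPrimitive n δ q x y) :=
  contDiff_infty_iff_deriv.2 ⟨fun t => (hasDerivAt_bumpPrimitive q x y t).differentiableAt,
    deriv_bumpPrimitive (n := n) (δ := δ) q x y ▸ contDiff_bumpDiff x y⟩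

lemma periodic_bumpPrimitive (q x y : ℝ) :
    Function.Periodic (bumpPrimitive n δ q x y) (2 * Real.pi) := fun t => by
  have hi := fun u v => (contDiff_bumpDiff (n := n) (δ := δ) x y).continuous.intervalIntegrable
    (μ := MeasureTheory.volume) u v
  rw [bumpPrimitive, ← intervalIntegral.integral_add_adjacent_intervals (hi q t) (hi t _),
    integral_bumpDiff, add_zero, bumpPrimitive]

lemma hasGevreyBounds_bumpPrimitive (hn : Odd n) {σ : ℝ} (hσ : 1 + 1 / (n : ℝ) ≤ σ)
    (q x y : ℝ) : HasGevreyBounds σ (bumpPrimitive n δ q x y) := by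
  obtain ⟨A, hA⟩ := (isBounded_iff_forall_norm_le.1
    ((periodic_bumpPrimitive (n := n) (δ := δ) q x y).isBounded_of_continuous
      Real.two_pi_pos.ne' (contDiff_bumpPrimitive q x y).continuous))
  refine HasGevreyBounds.of_deriv (A := A) (le_trans (by positivity) hσ) ?_
    fun t => hA _ (Set.mem_range_self t)
  rw [deriv_bumpPrimitive]
  exact hasGevreyBounds_bumpDiff hn hσ x y

lemma integral_bumpDiff_mul_bumpPrimitive_pos (hn : Odd n) (h0 : 0 < δ) {q x p y : ℝ}
    (hqx : q + δ < x - δ) (hxp : x + δ < p - δ) (hpy : p + δ < y - δ)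
    (hyq : y + δ < q + 2 * Real.pi - δ) :
    0 < ∫ s in (0 : ℝ)..(2 * Real.pi), bumpDiff n δ p q s * bumpPrimitive n δ q x y s := by
  have hpi : δ ≤ Real.pi := by linarith
  have hzero : ∀ s d : ℝ, δ ≤ |s - d| → |s - d| ≤ 2 * Real.pi - δ → cosBump n δ (s - d) = 0 :=
    fun s d => cosBump_eq_zero hn h0
  have hcont : ∀ d : ℝ, Continuous fun s => cosBump n δ (s - d) := fun d =>
    contDiff_cosBump.continuous.comp (continuous_sub_right d)
  have hv0 : ∀ t, |t - q| ≤ δ → bumpPrimitive n δ q x y t = 0 := by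
    intro t ht
    refine intervalIntegral.integral_zero_ae (Filter.Eventually.of_forall fun s hs => ?_)
    have hs' : |s - q| ≤ δ := (Set.abs_sub_left_of_mem_uIcc (Set.uIoc_subset_uIcc hs)).trans ht
    rw [abs_le] at hs'
    rw [bumpDiff, hzero s x, hzero s y, sub_zero]
    all_goals rw [abs_of_nonpos (by linarith)]; linarith
  have hvp : ∀ t, |t - p| ≤ δ →
      bumpPrimitive n δ q x y t = ∫ s in q..t, cosBump n δ (s - x) := by
    intro t ht
    rw [abs_le] at ht
    refine intervalIntegral.integral_congr fun s hs => ?_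
    rw [Set.uIcc_of_le (by linarith)] at hs
    have : cosBump n δ (s - y) = 0 := by
      apply hzero <;> rw [abs_of_nonpos (by linarith [hs.2])] <;> linarith [hs.1, hs.2]
    simp only [bumpDiff, this, sub_zero]
  have hper : Function.Periodic
      (fun s => bumpDiff n δ p q s * bumpPrimitive n δ q x y s) (2 * Real.pi) :=
    (periodic_bumpDiff p q).mul (periodic_bumpPrimitive q x y)
  have hshift := hper.intervalIntegral_add_eq 0 (q - δ)
  rw [zero_add] at hshift
  rw [hshift]
  refine intervalIntegral.integral_pos (by linarith [Real.pi_pos])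
    ((contDiff_bumpDiff p q).continuous.mul
      (contDiff_bumpPrimitive q x y).continuous).continuousOn ?_ ⟨p, ⟨by linarith, by linarith⟩, ?_⟩
  · intro t ht
    by_cases hq : |t - q| ≤ δ
    · rw [hv0 t hq, mul_zero]
    have hq' : cosBump n δ (t - q) = 0 := by
      refine hzero t q (not_le.1 hq).le (abs_le.2 ⟨?_, ?_⟩) <;> linarith [ht.1, ht.2]
    rw [bumpDiff, hq', sub_zero]
    by_cases hp : |t - p| ≤ δ
    · rw [hvp t hp]
      rw [abs_le] at hp
      exact mul_nonneg (cosBump_nonneg _)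
        (intervalIntegral.integral_nonneg (by linarith) fun s _ => cosBump_nonneg _)
    · rw [hzero t p (not_le.1 hp).le (abs_le.2 ⟨by linarith [ht.1], by linarith [ht.2]⟩), zero_mul]
  · have hq' : cosBump n δ (p - q) = 0 := by
      apply hzero <;> rw [abs_of_nonneg (by linarith)] <;> linarith
    rw [bumpDiff, hq', sub_zero, hvp p (by simpa using h0.le), sub_self]
    refine mul_pos (cosBump_zero_pos h0 hpi) (intervalIntegral.integral_pos (by linarith)
      (hcont x).continuousOn (fun s _ => cosBump_nonneg _) ⟨x, ⟨by linarith, by linarith⟩, ?_⟩)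
    rw [sub_self]
    exact cosBump_zero_pos h0 hpi

end bumpDiff

lemma exists_odd_one_add_inv_le {σ : ℝ} (hσ : 1 < σ) : ∃ n : ℕ, Odd n ∧ 1 + 1 / (n : ℝ) ≤ σ := by
  obtain ⟨m, hm⟩ := exists_nat_gt (1 / (σ - 1))
  refine ⟨2 * m + 1, odd_two_mul_add_one m, ?_⟩
  have hσ' : 0 < σ - 1 := sub_pos.2 hσ
  have h : 1 / (σ - 1) ≤ ((2 * m + 1 : ℕ) : ℝ) := by
    push_cast
    linarith [(Nat.cast_nonneg m : (0 : ℝ) ≤ m)]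
  have := one_div_le_one_div_of_le (by positivity) h
  rw [one_div_one_div] at this
  linarith

/-- Lemma 4.7 (construction lemma, following Hounie–Cardoso): if a sublevel set
`Ω̃_r = {t ∈ 𝕋 : B(t) < r}` of the induced primitive `B` of `-b` is not connected, then
some `Ω̃_{r₀}`, `r₀ < r`, has two connected components with disjoint closures, and for
every `σ > 1` there exist Gevrey-`σ` periodic functions `f₀, v₀` with the stated
support, mean and positivity properties. -/
theorem stmt8 (b : ℝ → ℝ) (hb : Continuous b)
    (hbper : Function.Periodic b (2 * Real.pi))
    (hb0 : (∫ s in (0:ℝ)..(2 * Real.pi), b s) = 0)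
    (B : AddCircle (2 * Real.pi) → ℝ) (hB : Continuous B)
    (hBb : ∀ t : ℝ, B (t : AddCircle (2 * Real.pi)) = -∫ s in (0:ℝ)..t, b s)
    (r : ℝ)
    (hdisc : ¬ IsPreconnected {t : AddCircle (2 * Real.pi) | B t < r}) :
    ∃ r₀ < r,
      (∃ a ∈ {t : AddCircle (2 * Real.pi) | B t < r₀},
        ∃ a' ∈ {t : AddCircle (2 * Real.pi) | B t < r₀},
          connectedComponentIn {t : AddCircle (2 * Real.pi) | B t < r₀} a ≠
            connectedComponentIn {t : AddCircle (2 * Real.pi) | B t < r₀} a' ∧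
          Disjoint
            (closure (connectedComponentIn {t : AddCircle (2 * Real.pi) | B t < r₀} a))
            (closure (connectedComponentIn {t : AddCircle (2 * Real.pi) | B t < r₀} a'))) ∧
      ∀ σ > (1 : ℝ), ∃ f₀ v₀ : ℝ → ℝ,
        ContDiff ℝ (⊤ : ℕ∞) f₀ ∧ ContDiff ℝ (⊤ : ℕ∞) v₀ ∧
        Function.Periodic f₀ (2 * Real.pi) ∧ Function.Periodic v₀ (2 * Real.pi) ∧
        (∃ C > (0 : ℝ), ∃ h > (0 : ℝ), ∀ k : ℕ, ∀ t : ℝ,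
          |iteratedDeriv k f₀ t| ≤ C * h ^ k * ((Nat.factorial k : ℝ)) ^ σ) ∧
        (∃ C > (0 : ℝ), ∃ h > (0 : ℝ), ∀ k : ℕ, ∀ t : ℝ,
          |iteratedDeriv k v₀ t| ≤ C * h ^ k * ((Nat.factorial k : ℝ)) ^ σ) ∧
        (∫ s in (0:ℝ)..(2 * Real.pi), f₀ s) = 0 ∧
        Disjoint
          (closure ((fun t : ℝ => (t : AddCircle (2 * Real.pi))) '' Function.support f₀))
          {t : AddCircle (2 * Real.pi) | B t < r₀} ∧
        closure ((fun t : ℝ => (t : AddCircle (2 * Real.pi))) '' Function.support (deriv v₀))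
          ⊆ {t : AddCircle (2 * Real.pi) | B t < r₀} ∧
        (0 < ∫ s in (0:ℝ)..(2 * Real.pi), f₀ s * v₀ s) := by
  have : Fact (0 < 2 * Real.pi) := ⟨Real.two_pi_pos⟩
  obtain ⟨q, x, p, y, hqx, hxp, hpy, hyq, hq, hx, hp, hy, H⟩ :=
    exists_alternating_of_not_isPreconnected hdisc
  obtain ⟨r₀, hlt, hr⟩ := exists_between (max_lt hx hy)
  obtain ⟨hx₀, hy₀⟩ := max_lt_iff.1 hlt
  have hcont : Continuous fun t : ℝ => B t := hB.comp (AddCircle.continuous_mk' _)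
  refine ⟨r₀, hr, ⟨x, hx₀, y, hy₀, fun heq => ?_, ?_⟩, fun σ hσ => ?_⟩
  · refine H (connectedComponentIn {t | B t < r₀} x)
      ((connectedComponentIn_subset _ _).trans fun t (ht : B t < r₀) => ht.trans hr)
      isPreconnected_connectedComponentIn (mem_connectedComponentIn hx₀) ?_
    rw [heq]
    exact mem_connectedComponentIn hy₀
  · exact disjoint_closure_connectedComponentIn hB hr hx₀ hy₀ H
  obtain ⟨n, hn, hnσ⟩ := exists_odd_one_add_inv_le hσ
  have hlow : ∀ c : ℝ, B c < r₀ → ∀ᶠ δ in nhds (0 : ℝ),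
      Metric.closedBall c δ ⊆ {t : ℝ | B t < r₀} := fun c hc =>
    eventually_closedBall_subset ((isOpen_lt hcont continuous_const).mem_nhds hc)
  have hhigh : ∀ c : ℝ, r ≤ B c → ∀ᶠ δ in nhds (0 : ℝ),
      Metric.closedBall c δ ⊆ {t : ℝ | r₀ < B t} := fun c hc =>
    eventually_closedBall_subset ((isOpen_lt continuous_const hcont).mem_nhds (hr.trans_le hc))
  have hgap : ∀ u v : ℝ, u < v → ∀ᶠ δ in nhds (0 : ℝ), u + δ < v - δ := fun u v huv =>
    ContinuousAt.eventually_lt (by fun_prop) (by fun_prop) (by simpa using huv)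
  obtain ⟨δ, ⟨⟨⟨dx, dy⟩, dp, dq⟩, ⟨g1, g2⟩, g3, g4⟩, h0⟩ := ((((((hlow x hx₀).and (hlow y hy₀)).and
    ((hhigh p hp).and (hhigh q hq))).and (((hgap _ _ hqx).and (hgap _ _ hxp)).and
    ((hgap _ _ hpy).and (hgap _ _ hyq)))).filter_mono
      (nhdsWithin_le_nhds (s := Set.Ioi 0))).and self_mem_nhdsWithin).exists
  refine ⟨bumpDiff n δ p q, bumpPrimitive n δ q x y, contDiff_bumpDiff p q,
    contDiff_bumpPrimitive q x y, periodic_bumpDiff p q, periodic_bumpPrimitive q x y,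
    hasGevreyBounds_bumpDiff hn hnσ p q, hasGevreyBounds_bumpPrimitive hn hnσ q x y,
    by simpa using integral_bumpDiff (n := n) (δ := δ) p q 0, ?_, ?_,
    integral_bumpDiff_mul_bumpPrimitive_pos hn h0 g1 g2 g3 g4⟩
  · refine Set.disjoint_left.2 fun z hz (hz' : B z < r₀) => ?_
    have hz₀ : z ∈ {t | r₀ < B t} := closure_coe_image_support_bumpDiff_subset hn h0 dp dq hz
    exact lt_asymm hz₀ hz'
  · rw [deriv_bumpPrimitive]
    exact closure_coe_image_support_bumpDiff_subset hn h0 dx dy
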